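/- Fix an integer k ≥ 2 and a degree-optimal evaluation scheme with k multiplications whose first multiplication is degenerate, i.e., h_{1,2} = 0 or g_{1,2} = 0. Then P_3 is a polynomial of degree at most 1 (a linear combination of P_1 = 1 and P_2 = X), and consequently the output polynomial z of the scheme is also the output of some degree-optimal evaluation scheme with only k − 1 multiplications. -/

import Mathlib

open Polynomial

/-- The intermediate polynomials `P` of a degree-optimal evaluation scheme with `k`
multiplications and coefficients `h g`: `P 1 = 1`, `P 2 = X`, and for `1 ≤ j ≤ k`,
`P (j+2) = (∑_{i=1}^{j+1} h j i • P i) * (∑_{i=1}^{j+1} g j i • P i)`. -/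
def SchemeP (k : ℕ) (h g : ℕ → ℕ → ℂ) (P : ℕ → Polynomial ℂ) : Prop :=
  P 1 = 1 ∧ P 2 = Polynomial.X ∧
    ∀ j, 1 ≤ j → j ≤ k →
      P (j + 2) =
        (∑ i ∈ Finset.Icc 1 (j + 1), Polynomial.C (h j i) * P i) *
        (∑ i ∈ Finset.Icc 1 (j + 1), Polynomial.C (g j i) * P i)

/-- The output polynomial `z = ∑_{i=1}^{k+2} y i • P i` of a degree-optimal evaluation
scheme with `k` multiplications. -/
noncomputable def SchemeOutput (k : ℕ) (y : ℕ → ℂ) (P : ℕ → Polynomial ℂ) : Polynomial ℂ :=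
  ∑ i ∈ Finset.Icc 1 (k + 2), Polynomial.C (y i) * P i

/-!
A term of a scheme that is a linear combination of the earlier terms costs nothing: substituting
that combination into the later linear combinations changes neither them nor their products, so
the multiplication producing the term can be dropped. A degenerate first multiplication has a
constant factor, so `P 3` has degree at most `1` and is such a combination of `P 1 = 1` and
`P 2 = X`.
-/

section Elimination

variable {R M : Type*} [Semiring R] [AddCommMonoid M] [Module R M]

/-- The sequence `u` with its term of index `m + 1` deleted, used to remove one polynomial from a
scheme. The index is shifted so that the terms kept in place are those of index `i ≤ m`. -/
def eraseTerm {α : Type*} (m : ℕ) (u : ℕ → α) (i : ℕ) : α :=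
  if i ≤ m then u i else u (i + 1)

lemma eraseTerm_of_le {α : Type*} {m i : ℕ} (u : ℕ → α) (hi : i ≤ m) :
    eraseTerm m u i = u i :=
  if_pos hi

lemma eraseTerm_of_lt {α : Type*} {m i : ℕ} (u : ℕ → α) (hi : m < i) :
    eraseTerm m u i = u (i + 1) :=
  if_neg hi.not_ge

/-- The coefficients of the linear combination `∑ c i • u i` once `u (m + 1)` has been replaced by
`∑ i ∈ Icc 1 m, a i • u i`, relative to the sequence `eraseTerm m u`. -/
def substCoeff (m : ℕ) (a c : ℕ → R) (i : ℕ) : R :=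
  if i ≤ m then c i + c (m + 1) * a i else c (i + 1)

lemma substCoeff_of_le {m i : ℕ} (a c : ℕ → R) (hi : i ≤ m) :
    substCoeff m a c i = c i + c (m + 1) * a i :=
  if_pos hi

lemma substCoeff_of_lt {m i : ℕ} (a c : ℕ → R) (hi : m < i) :
    substCoeff m a c i = c (i + 1) :=
  if_neg hi.not_ge

lemma sum_smul_eraseTerm_of_le {m n : ℕ} (hnm : n ≤ m) (c : ℕ → R) (u : ℕ → M) :
    ∑ i ∈ Finset.Icc 1 n, c i • eraseTerm m u i = ∑ i ∈ Finset.Icc 1 n, c i • u i :=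
  Finset.sum_congr rfl fun i hi => by
    rw [eraseTerm_of_le u ((Finset.mem_Icc.mp hi).2.trans hnm)]

lemma sum_substCoeff_smul_eraseTerm {m n : ℕ} (hmn : m ≤ n) {a : ℕ → R} {u : ℕ → M}
    (hu : u (m + 1) = ∑ i ∈ Finset.Icc 1 m, a i • u i) (c : ℕ → R) :
    ∑ i ∈ Finset.Icc 1 n, substCoeff m a c i • eraseTerm m u i =
      ∑ i ∈ Finset.Icc 1 (n + 1), c i • u i := by
  induction n, hmn using Nat.le_induction with
  | base =>
    calc ∑ i ∈ Finset.Icc 1 m, substCoeff m a c i • eraseTerm m u i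
        = ∑ i ∈ Finset.Icc 1 m, (c i • u i + c (m + 1) • a i • u i) :=
          Finset.sum_congr rfl fun i hi => by
            have him : i ≤ m := (Finset.mem_Icc.mp hi).2
            rw [substCoeff_of_le a c him, eraseTerm_of_le u him, add_smul, mul_smul]
      _ = ∑ i ∈ Finset.Icc 1 m, c i • u i + c (m + 1) • u (m + 1) := by
          rw [Finset.sum_add_distrib, ← Finset.smul_sum, ← hu]
      _ = ∑ i ∈ Finset.Icc 1 (m + 1), c i • u i :=
          (Finset.sum_Icc_succ_top (by omega) _).symm
  | succ n hmn ih =>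
    have hlt : m < n + 1 := Nat.lt_succ_of_le hmn
    rw [Finset.sum_Icc_succ_top (by omega), ih, substCoeff_of_lt a c hlt, eraseTerm_of_lt u hlt,
      ← Finset.sum_Icc_succ_top (by omega)]

end Elimination

section Scheme

variable {R : Type*} [Semiring R]

/-- Degree-optimal evaluation schemes with `k` multiplications over an arbitrary semiring: the
notion `SchemeP`, with linear combinations written as scalar multiples. -/
def IsEvalScheme (k : ℕ) (h g : ℕ → ℕ → R) (P : ℕ → R[X]) : Prop :=
  P 1 = 1 ∧ P 2 = X ∧ ∀ j, 1 ≤ j → j ≤ k →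
    P (j + 2) = (∑ i ∈ Finset.Icc 1 (j + 1), h j i • P i) *
      (∑ i ∈ Finset.Icc 1 (j + 1), g j i • P i)

/-- The output of an evaluation scheme with `k` multiplications over an arbitrary semiring: the
notion `SchemeOutput`, with linear combinations written as scalar multiples. -/
noncomputable def evalOutput (k : ℕ) (y : ℕ → R) (P : ℕ → R[X]) : R[X] :=
  ∑ i ∈ Finset.Icc 1 (k + 2), y i • P i

lemma schemeP_iff_isEvalScheme {k : ℕ} {h g : ℕ → ℕ → ℂ} {P : ℕ → ℂ[X]} :
    SchemeP k h g P ↔ IsEvalScheme k h g P := by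
  simp only [SchemeP, IsEvalScheme, smul_eq_C_mul]

lemma schemeOutput_eq_evalOutput (k : ℕ) (y : ℕ → ℂ) (P : ℕ → ℂ[X]) :
    SchemeOutput k y P = evalOutput k y P := by
  simp only [SchemeOutput, evalOutput, smul_eq_C_mul]

/-- The coefficients of one factor of each multiplication after the `m`-th multiplication, whose
result is `∑ i ∈ Icc 1 (m + 1), a i • P i`, has been removed from a scheme. -/
def eliminateRow (m : ℕ) (a : ℕ → R) (h : ℕ → ℕ → R) (j : ℕ) : ℕ → R :=
  if j < m then h j else substCoeff (m + 1) a (h (j + 1))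

lemma sum_eliminateRow_of_lt {m j : ℕ} (hjm : j < m) (a : ℕ → R) (h : ℕ → ℕ → R)
    (P : ℕ → R[X]) :
    ∑ i ∈ Finset.Icc 1 (j + 1), eliminateRow m a h j i • eraseTerm (m + 1) P i =
      ∑ i ∈ Finset.Icc 1 (j + 1), h j i • P i := by
  rw [eliminateRow, if_pos hjm, sum_smul_eraseTerm_of_le (by omega)]

lemma sum_eliminateRow_of_le {m j : ℕ} (hmj : m ≤ j) {a : ℕ → R} {P : ℕ → R[X]}
    (hPm : P (m + 2) = ∑ i ∈ Finset.Icc 1 (m + 1), a i • P i) (h : ℕ → ℕ → R) :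
    ∑ i ∈ Finset.Icc 1 (j + 1), eliminateRow m a h j i • eraseTerm (m + 1) P i =
      ∑ i ∈ Finset.Icc 1 (j + 2), h (j + 1) i • P i := by
  rw [eliminateRow, if_neg hmj.not_gt, sum_substCoeff_smul_eraseTerm (by omega) hPm]

namespace IsEvalScheme

variable {k m : ℕ} {h g : ℕ → ℕ → R} {P : ℕ → R[X]}

lemma eliminate (hP : IsEvalScheme (k + 1) h g P) (hm : 1 ≤ m) {a : ℕ → R}
    (hPm : P (m + 2) = ∑ i ∈ Finset.Icc 1 (m + 1), a i • P i) :
    IsEvalScheme k (eliminateRow m a h) (eliminateRow m a g) (eraseTerm (m + 1) P) := by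
  obtain ⟨hP1, hP2, hmul⟩ := hP
  refine ⟨?_, ?_, fun j hj hjk => ?_⟩
  · rw [eraseTerm_of_le P (by omega), hP1]
  · rw [eraseTerm_of_le P (by omega), hP2]
  · rcases lt_or_ge j m with hjm | hmj
    · rw [eraseTerm_of_le P (by omega), hmul j hj (by omega), sum_eliminateRow_of_lt hjm,
        sum_eliminateRow_of_lt hjm]
    · rw [eraseTerm_of_lt P (by omega), sum_eliminateRow_of_le hmj hPm,
        sum_eliminateRow_of_le hmj hPm]
      exact hmul (j + 1) (by omega) (by omega)

lemma sum_smul_one_two (hP : IsEvalScheme k h g P) (c : ℕ → R) :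
    ∑ i ∈ Finset.Icc 1 2, c i • P i = C (c 2) * X + C (c 1) := by
  rw [Finset.sum_Icc_succ_top (by omega), Finset.Icc_self, Finset.sum_singleton, hP.1, hP.2.1,
    smul_eq_C_mul, smul_eq_C_mul, mul_one, add_comm]

lemma three_eq (hP : IsEvalScheme k h g P) (hk : 1 ≤ k) :
    P 3 = (C (h 1 2) * X + C (h 1 1)) * (C (g 1 2) * X + C (g 1 1)) := by
  rw [hP.2.2 1 le_rfl hk, hP.sum_smul_one_two, hP.sum_smul_one_two]

lemma degree_three_le_one (hP : IsEvalScheme k h g P) (hk : 1 ≤ k)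
    (hdeg : h 1 2 = 0 ∨ g 1 2 = 0) : (P 3).degree ≤ 1 := by
  rw [hP.three_eq hk]
  rcases hdeg with hh | hg
  · rw [hh, C_0, zero_mul, zero_add, ← zero_add 1]
    exact degree_mul_le_of_le degree_C_le degree_linear_le
  · rw [hg, C_0, zero_mul, zero_add, ← add_zero 1]
    exact degree_mul_le_of_le degree_linear_le degree_C_le

lemma eq_sum_coeff_smul_of_degree_le_one (hP : IsEvalScheme k h g P) {p : R[X]}
    (hp : p.degree ≤ 1) : p = ∑ i ∈ Finset.Icc 1 2, p.coeff (i - 1) • P i := by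
  rw [hP.sum_smul_one_two]
  exact eq_X_add_C_of_degree_le_one hp

end IsEvalScheme

theorem degenerate_first_multiplication_general (k : ℕ) (h g : ℕ → ℕ → R) (y : ℕ → R)
    (P : ℕ → R[X]) (hP : IsEvalScheme (k + 1) h g P) (hdeg : h 1 2 = 0 ∨ g 1 2 = 0) :
    (P 3).degree ≤ 1 ∧
    ∃ (h' g' : ℕ → ℕ → R) (y' : ℕ → R) (P' : ℕ → R[X]),
      IsEvalScheme k h' g' P' ∧ evalOutput k y' P' = evalOutput (k + 1) y P := by
  have hdeg3 : (P 3).degree ≤ 1 := hP.degree_three_le_one (Nat.le_add_left 1 k) hdeg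
  have hP3 : P 3 = ∑ i ∈ Finset.Icc 1 2, (P 3).coeff (i - 1) • P i :=
    hP.eq_sum_coeff_smul_of_degree_le_one hdeg3
  exact ⟨hdeg3, _, _, _, _, hP.eliminate le_rfl hP3,
    sum_substCoeff_smul_eraseTerm (Nat.le_add_left 2 k) hP3 y⟩

end Scheme

/-- If the first multiplication of a degree-optimal evaluation scheme with `k ≥ 2`
multiplications is degenerate (`h 1 2 = 0` or `g 1 2 = 0`), then `P 3` has degree at
most `1`, and the output polynomial is also the output of some degree-optimal
evaluation scheme with `k - 1` multiplications. -/
theorem degenerate_first_multiplication (k : ℕ) (hk : 2 ≤ k) (h g : ℕ → ℕ → ℂ)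
    (y : ℕ → ℂ) (P : ℕ → Polynomial ℂ) (hP : SchemeP k h g P)
    (hdeg : h 1 2 = 0 ∨ g 1 2 = 0) :
    (P 3).degree ≤ 1 ∧
    ∃ (h' g' : ℕ → ℕ → ℂ) (y' : ℕ → ℂ) (P' : ℕ → Polynomial ℂ),
      SchemeP (k - 1) h' g' P' ∧
      SchemeOutput (k - 1) y' P' = SchemeOutput k y P := by
  obtain ⟨k, rfl⟩ := Nat.exists_eq_add_of_le' (one_le_two.trans hk)
  simp only [schemeP_iff_isEvalScheme, schemeOutput_eq_evalOutput] at hP ⊢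
  exact degenerate_first_multiplication_general k h g y P hP hdeg
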